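/- Fix s ∈ ℝ, k ≥ 1, distinct points y_1, …, y_k ∈ ℕ, and let θ : ℕ → (0, ∞) satisfy (θ(N) − N)/√N → s as N → ∞. Then the k×k determinants of the Charlier kernel converge to the corresponding determinant of the discrete Hermite kernel: lim_{N→∞} det[ K^{ch}_{N,θ(N)}(y_i, y_j) ]_{1≤i,j≤k} = det[ K_s(y_i, y_j) ]_{1≤i,j≤k}. -/

import Mathlib

open Filter
open scoped Nat Topology

noncomputable section

/-- The Charlier polynomial of degree `m` with parameter `θ`, evaluated at `x ∈ ℕ`:
`C_m(x;θ) = Σ_{k=0}^m (−1)^k·(m choose k)·(x choose k)·k!·θ^{−k}`. -/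
def charlier (θ : ℝ) (m x : ℕ) : ℝ :=
  ∑ k ∈ Finset.range (m + 1),
    (-1 : ℝ) ^ k * (m.choose k : ℝ) * (x.choose k : ℝ) * (k ! : ℝ) / θ ^ k

/-- The normalized Charlier function
`C̃_m(x;θ) = e^{−θ/2}·θ^{(x+m)/2}·(x!·m!)^{−1/2}·C_m(x;θ)`. -/
def normalizedCharlier (θ : ℝ) (m x : ℕ) : ℝ :=
  Real.exp (-θ / 2) * Real.sqrt (θ ^ (x + m)) / Real.sqrt ((x ! : ℝ) * (m ! : ℝ)) *
    charlier θ m x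

/-- The Charlier kernel `K^{ch}_{N,θ}(x,y) = Σ_{m=0}^{N−1} C̃_m(x;θ)·C̃_m(y;θ)`. -/
def charlierKernel (N : ℕ) (θ : ℝ) (x y : ℕ) : ℝ :=
  ∑ m ∈ Finset.range N, normalizedCharlier θ m x * normalizedCharlier θ m y

/-- The discrete Hermite kernel with parameter `s ∈ ℝ`:
`K_s(x,y) = (2π·x!·y!)^{−1/2} ∫_s^∞ e^{−t²/2}·He_x(t)·He_y(t) dt` for `x, y ∈ ℕ`,
where `He_n` is the probabilists' Hermite polynomial. -/
def discreteHermiteKernel (s : ℝ) (x y : ℕ) : ℝ :=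
  (Real.sqrt (2 * Real.pi * (x ! : ℝ) * (y ! : ℝ)))⁻¹ *
    ∫ t in Set.Ioi s, Real.exp (-t ^ 2 / 2) * Polynomial.aeval t (Polynomial.hermite x) *
      Polynomial.aeval t (Polynomial.hermite y)

def poisW (θ : ℝ) (m : ℕ) : ℝ := Real.exp (-θ) * θ ^ m / (m ! : ℝ)

lemma charlier_ext (θ : ℝ) (m x M : ℕ) (h : m ≤ M) : charlier θ m x =
    ∑ k ∈ Finset.range (M + 1),
    (-1 : ℝ) ^ k * (m.choose k : ℝ) * (x.choose k : ℝ) * (k ! : ℝ) / θ ^ k := by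
  unfold charlier
  apply Finset.sum_subset
  · intro a; simp only [Finset.mem_range]; omega
  · intro a _ ha
    simp only [Finset.mem_range] at ha
    rw [Nat.choose_eq_zero_of_lt (by omega : m < a)]; simp

lemma charlier_symm (θ : ℝ) (m x : ℕ) : charlier θ m x = charlier θ x m := by
  rw [charlier_ext θ m x (max m x) (le_max_left _ _), charlier_ext θ x m (max m x) (le_max_right _ _)]
  exact Finset.sum_congr rfl fun k _ => by ring

lemma charlier_fwd (θ : ℝ) (hθ : 0 < θ) (m y : ℕ) :
    charlier θ (m+1) (y+1) = charlier θ m (y+1) - ((y:ℝ)+1)/θ * charlier θ m y := by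
  rw [charlier_ext θ m (y+1) (m+1) (by omega)]
  unfold charlier
  rw [Finset.sum_range_succ' _ (m+1), Finset.sum_range_succ' _ (m+1), Finset.mul_sum]
  rw [add_sub_right_comm, ← Finset.sum_sub_distrib]
  congr 1
  · refine Finset.sum_congr rfl fun k _ => ?_
    have h1 : ((m+1).choose (k+1) : ℝ) = m.choose k + m.choose (k+1) := by
      rw [Nat.choose_succ_succ]; push_cast; ring
    have h2 : ((y+1).choose (k+1) : ℝ) * ((k+1)! : ℝ) = ((y:ℝ)+1) * (y.choose k) * (k ! : ℝ) := by
      have := Nat.add_one_mul_choose_eq y k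
      rw [Nat.factorial_succ]
      have h3 : ((y:ℝ)+1) * (y.choose k) = ((y+1).choose (k+1)) * ((k:ℝ)+1) := by exact_mod_cast this
      rw [h3]; push_cast; ring
    have e : ∀ c : ℝ, (-1 : ℝ) ^ (k+1) * c * ((y+1).choose (k+1) : ℝ) * ((k+1)! : ℝ) / θ ^ (k+1)
        = (-1 : ℝ) ^ (k+1) * c * (((y:ℝ)+1) * (y.choose k) * (k ! : ℝ)) / θ^(k+1) := by
      intro c; rw [← h2]; ring
    rw [e, e, h1]
    field_simp
    ring
  · simp

lemma charlier_bwd (θ : ℝ) (hθ : 0 < θ) (m x : ℕ) :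
    charlier θ (m+1) (x+1) = charlier θ (m+1) x - ((m:ℝ)+1)/θ * charlier θ m x := by
  rw [charlier_symm, charlier_fwd θ hθ, charlier_symm θ x, charlier_symm θ x]

lemma charlier_zero_left (θ : ℝ) (x : ℕ) : charlier θ 0 x = 1 := by simp [charlier]
lemma charlier_zero_right (θ : ℝ) (x : ℕ) : charlier θ x 0 = 1 := by
  rw [charlier_symm, charlier_zero_left]

lemma charlier_three (θ : ℝ) (hθ : 0 < θ) (m n : ℕ) :
    θ * charlier θ m (n+2) = ((n:ℝ)+1+θ-m) * charlier θ m (n+1) - ((n:ℝ)+1) * charlier θ m n := by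
  cases m with
  | zero => simp [charlier_zero_left]
  | succ m =>
    have h1 := charlier_bwd θ hθ m (n+1)
    have h2 := charlier_bwd θ hθ m n
    have h3 := charlier_fwd θ hθ m n
    have h4 : charlier θ m (n+1) = charlier θ (m+1) (n+1) + ((n:ℝ)+1)/θ * charlier θ m n := by
      rw [h3]; ring
    have h5 : ((m:ℝ)+1)/θ * charlier θ m n = charlier θ (m+1) n - charlier θ (m+1) (n+1) := by
      rw [h2]; ring
    have h6 : charlier θ (m+1) (n+2) = charlier θ (m+1) (n+1) - ((m:ℝ)+1)/θ * charlier θ (m+1) (n+1)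
        - ((n:ℝ)+1)/θ * (charlier θ (m+1) n - charlier θ (m+1) (n+1)) := by
      rw [← h5, h1, h4]; ring
    rw [h6]; push_cast; field_simp; ring

lemma poisW_succ (θ : ℝ) (hθ : 0 < θ) (m : ℕ) :
    poisW θ (m+1) * (((m:ℝ)+1)/θ) = poisW θ m := by
  unfold poisW
  rw [Nat.factorial_succ]; push_cast
  field_simp
  ring

lemma abel_sum (θ : ℝ) (hθ : 0 < θ) (x y N : ℕ) :
    ∑ m ∈ Finset.range (N+1), poisW θ m * charlier θ m (x+1) * charlier θ m (y+1)
    = poisW θ N * charlier θ N x * charlier θ (N+1) (y+1)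
      + ((y:ℝ)+1)/θ * ∑ m ∈ Finset.range (N+1), poisW θ m * charlier θ m x * charlier θ m y := by
  induction N with
  | zero =>
    simp only [zero_add, Finset.sum_range_one]
    have := charlier_fwd θ hθ 0 y
    rw [zero_add] at this
    rw [this]; simp [charlier_zero_left]; ring
  | succ N ih =>
    rw [Finset.sum_range_succ, ih, Finset.sum_range_succ _ (N+1)]
    rw [charlier_fwd θ hθ (N+1) y, charlier_bwd θ hθ N x, ← poisW_succ θ hθ N]
    ring

lemma abel_sum0 (θ : ℝ) (hθ : 0 < θ) (x N : ℕ) :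
    ∑ m ∈ Finset.range (N+1), poisW θ m * charlier θ m (x+1) = poisW θ N * charlier θ N x := by
  induction N with
  | zero => simp [charlier_zero_left]
  | succ N ih =>
    rw [Finset.sum_range_succ, ih, charlier_bwd θ hθ N x, ← poisW_succ θ hθ N]
    ring

def chP (θ : ℝ) (m x : ℕ) : ℝ := Real.sqrt θ ^ x * charlier θ m x

def chJ (N : ℕ) (θ : ℝ) (x y : ℕ) : ℝ :=
  ∑ m ∈ Finset.range N, poisW θ m * chP θ m x * chP θ m y

lemma kernel_eq (N : ℕ) (θ : ℝ) (hθ : 0 < θ) (x y : ℕ) :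
    charlierKernel N θ x y = (Real.sqrt ((x ! : ℝ) * (y ! : ℝ)))⁻¹ * chJ N θ x y := by
  unfold charlierKernel chJ normalizedCharlier poisW chP
  rw [Finset.mul_sum]
  refine Finset.sum_congr rfl fun m _ => ?_
  have hx : (0:ℝ) < x ! := by positivity
  have hy : (0:ℝ) < y ! := by positivity
  have hm : (0:ℝ) < m ! := by positivity
  have he : Real.exp (-θ) = Real.exp (-θ/2) * Real.exp (-θ/2) := by
    rw [← Real.exp_add]; ring_nf
  have hs : ∀ n, Real.sqrt (θ ^ n) = Real.sqrt θ ^ n := fun n => by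
    have h : θ ^ n = (Real.sqrt θ ^ n) ^ 2 := by
      rw [← pow_mul, mul_comm, pow_mul, Real.sq_sqrt hθ.le]
    rw [h, Real.sqrt_sq (by positivity)]
  have ht : θ ^ m = Real.sqrt θ ^ m * Real.sqrt θ ^ m := by
    rw [← mul_pow, Real.mul_self_sqrt hθ.le]
  have hmm : (m ! : ℝ) = Real.sqrt (m !) * Real.sqrt (m !) := (Real.mul_self_sqrt hm.le).symm
  rw [hs, hs, he, Real.sqrt_mul hx.le, Real.sqrt_mul hx.le, Real.sqrt_mul hy.le, ht]
  nth_rewrite 3 [hmm]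
  have := Real.sqrt_pos.2 hx
  have := Real.sqrt_pos.2 hy
  have := Real.sqrt_pos.2 hm
  field_simp
  ring

lemma chJ_symm (N : ℕ) (θ : ℝ) (x y : ℕ) : chJ N θ x y = chJ N θ y x :=
  Finset.sum_congr rfl fun m _ => by ring

lemma chJ_succ (N : ℕ) (θ : ℝ) (hθ : 0 < θ) (x y : ℕ) :
    chJ (N+1) θ (x+1) (y+1) = Real.sqrt θ * poisW θ N * chP θ N x * chP θ (N+1) (y+1)
      + ((y:ℝ)+1) * chJ (N+1) θ x y := by
  have h := abel_sum θ hθ x y N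
  have e : ∀ a b, chJ (N+1) θ a b = Real.sqrt θ ^ (a+b) * ∑ m ∈ Finset.range (N+1), poisW θ m * charlier θ m a * charlier θ m b := by
    intro a b
    rw [chJ, Finset.mul_sum]
    exact Finset.sum_congr rfl fun m _ => by unfold chP; ring
  rw [e, e, h]
  unfold chP
  have h2 : Real.sqrt θ ^ (x+1+(y+1)) = Real.sqrt θ ^ (x+y) * θ := by
    nth_rewrite 3 [← Real.mul_self_sqrt hθ.le]; ring
  rw [mul_add, h2]
  congr 1
  · rw [← h2]; ring
  · field_simp

lemma chJ_succ0 (N : ℕ) (θ : ℝ) (hθ : 0 < θ) (x : ℕ) :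
    chJ (N+1) θ (x+1) 0 = Real.sqrt θ * poisW θ N * chP θ N x := by
  have h := abel_sum0 θ hθ x N
  have : chJ (N+1) θ (x+1) 0 = Real.sqrt θ ^ (x+1) * ∑ m ∈ Finset.range (N+1), poisW θ m * charlier θ m (x+1) := by
    rw [chJ, Finset.mul_sum]
    exact Finset.sum_congr rfl fun m _ => by unfold chP; rw [charlier_zero_right]; ring
  rw [this, h]; unfold chP; ring

lemma chP_three (θ : ℝ) (hθ : 0 < θ) (m n : ℕ) :
    chP θ m (n+2) = (((n:ℝ)+1) / Real.sqrt θ + (θ - m)/Real.sqrt θ) * chP θ m (n+1) - ((n:ℝ)+1) * chP θ m n := by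
  have h := charlier_three θ hθ m n
  have hs := Real.sqrt_pos.2 hθ
  have : chP θ m (n+2) = Real.sqrt θ ^ n * (θ * charlier θ m (n+2)) := by
    unfold chP
    have h3 := Real.mul_self_sqrt hθ.le
    rw [← mul_assoc, pow_add, pow_two, h3]
  rw [this, h]; unfold chP
  field_simp
  ring

def herm (n : ℕ) (t : ℝ) : ℝ := Polynomial.aeval t (Polynomial.hermite n)

lemma hermite_deriv (n : ℕ) : Polynomial.derivative (Polynomial.hermite (n+1)) =
    ((n:Polynomial ℤ)+1) * Polynomial.hermite n := by
  induction n with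
  | zero => simp
  | succ n ih =>
    rw [Polynomial.hermite_succ (n+1), Polynomial.derivative_sub, Polynomial.derivative_mul, ih,
      Polynomial.derivative_mul, Polynomial.derivative_X, Polynomial.hermite_succ n]
    have : Polynomial.derivative ((n:Polynomial ℤ)+1) = 0 := by simp
    rw [this]; push_cast; ring

lemma herm_zero (t : ℝ) : herm 0 t = 1 := by simp [herm]
lemma herm_one (t : ℝ) : herm 1 t = t := by simp [herm]
lemma herm_three (n : ℕ) (t : ℝ) : herm (n+2) t = t * herm (n+1) t - ((n:ℝ)+1) * herm n t := by
  unfold herm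
  rw [Polynomial.hermite_succ (n+1), hermite_deriv]
  simp

lemma herm_hasDerivAt (n : ℕ) (t : ℝ) : HasDerivAt (herm (n+1)) (((n:ℝ)+1) * herm n t) t := by
  have := Polynomial.hasDerivAt_aeval (Polynomial.hermite (n+1)) t
  rw [hermite_deriv] at this
  convert! this using 1
  simp [herm]

lemma herm_hasDerivAt' (n : ℕ) (t : ℝ) : HasDerivAt (herm n) (t * herm n t - herm (n+1) t) t := by
  have := Polynomial.hasDerivAt_aeval (Polynomial.hermite n) t
  convert! this using 1
  simp [herm]

lemma chP_tendsto (s : ℝ) (θ : ℕ → ℝ) (m : ℕ → ℕ) (hpos : ∀ N, 0 < θ N)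
    (hinf : Tendsto θ atTop atTop)
    (h : Tendsto (fun N => (θ N - m N) / Real.sqrt (θ N)) atTop (𝓝 s)) (x : ℕ) :
    Tendsto (fun N => chP (θ N) (m N) x) atTop (𝓝 (herm x s)) := by
  have key : ∀ x, Tendsto (fun N => chP (θ N) (m N) x) atTop (𝓝 (herm x s)) ∧
      Tendsto (fun N => chP (θ N) (m N) (x+1)) atTop (𝓝 (herm (x+1) s)) := by
    intro x
    induction x with
    | zero =>
      constructor
      · simp [chP, charlier_zero_right, herm_zero]
      · rw [herm_one]
        refine h.congr fun N => ?_
        have hp := hpos N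
        have hs := Real.sqrt_pos.2 hp
        have h1 : charlier (θ N) (m N) 1 = 1 - m N / θ N := by
          rw [charlier_symm]; simp [charlier, Finset.sum_range_succ]; ring
        simp only [chP, zero_add, pow_one]
        rw [h1]
        have h2 := Real.mul_self_sqrt hp.le
        rw [div_eq_iff hs.ne', mul_right_comm, h2]
        field_simp
    | succ n ih =>
      refine ⟨ih.2, ?_⟩
      rw [herm_three]
      simp_rw [fun N => chP_three (θ N) (hpos N) (m N) n]
      have h0 : Tendsto (fun N => ((n:ℝ)+1) / Real.sqrt (θ N)) atTop (𝓝 0) :=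
        Tendsto.const_div_atTop (Real.tendsto_sqrt_atTop.comp hinf) _
      have := ((h0.add h).mul ih.2).sub (ih.1.const_mul ((n:ℝ)+1))
      simpa using this
  exact (key x).1

def gphi (s : ℝ) : ℝ := Real.exp (-s^2/2) / Real.sqrt (2 * Real.pi)

lemma sqrtN_inf : Tendsto (fun N : ℕ => Real.sqrt (N:ℝ)) atTop atTop :=
  Real.tendsto_sqrt_atTop.comp tendsto_natCast_atTop_atTop

lemma x_tendsto (s : ℝ) (θ : ℕ → ℝ)
    (hlim : Tendsto (fun N : ℕ => (θ N - (N : ℝ)) / Real.sqrt (N : ℝ)) atTop (𝓝 s)) :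
    Tendsto (fun N : ℕ => (θ N - (N : ℝ)) / N) atTop (𝓝 0) := by
  have := hlim.mul (sqrtN_inf.inv_tendsto_atTop)
  rw [mul_zero] at this
  refine this.congr fun N => ?_
  simp only [Pi.inv_apply]
  rw [← div_eq_mul_inv, div_div, Real.mul_self_sqrt (by positivity)]

lemma ratio_tendsto (s : ℝ) (θ : ℕ → ℝ)
    (hlim : Tendsto (fun N : ℕ => (θ N - (N : ℝ)) / Real.sqrt (N : ℝ)) atTop (𝓝 s)) :
    Tendsto (fun N : ℕ => θ N / N) atTop (𝓝 1) := by
  have := (x_tendsto s θ hlim).const_add 1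
  rw [add_zero] at this
  refine this.congr' ?_
  filter_upwards [eventually_gt_atTop 0] with N hN
  have : (0:ℝ) < N := by exact_mod_cast hN
  field_simp; ring

lemma theta_inf (s : ℝ) (θ : ℕ → ℝ)
    (hlim : Tendsto (fun N : ℕ => (θ N - (N : ℝ)) / Real.sqrt (N : ℝ)) atTop (𝓝 s)) :
    Tendsto θ atTop atTop := by
  have := (ratio_tendsto s θ hlim).pos_mul_atTop one_pos tendsto_natCast_atTop_atTop
  refine this.congr' ?_
  filter_upwards [eventually_gt_atTop 0] with N hN
  have : (0:ℝ) < N := by exact_mod_cast hN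
  field_simp

lemma log_lim (s : ℝ) (θ : ℕ → ℝ)
    (hlim : Tendsto (fun N : ℕ => (θ N - (N : ℝ)) / Real.sqrt (N : ℝ)) atTop (𝓝 s)) :
    Tendsto (fun N : ℕ => N * Real.log (θ N / N) - (θ N - N)) atTop (𝓝 (-s^2/2)) := by
  have hx := x_tendsto s θ hlim
  have hsq : Tendsto (fun N : ℕ => (N:ℝ) * ((θ N - N)/N)^2) atTop (𝓝 (s^2)) := by
    refine (hlim.pow 2).congr fun N => ?_
    rcases Nat.eq_zero_or_pos N with rfl | hN
    · simp
    have : (0:ℝ) < N := by exact_mod_cast hN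
    rw [div_pow, Real.sq_sqrt this.le]; field_simp
  have habs : Tendsto (fun N : ℕ => |(θ N - N)/N|) atTop (𝓝 0) := by simpa using hx.abs
  have herr : Tendsto (fun N : ℕ => (N:ℝ) * ((θ N - N)/N)^2 * (|(θ N - N)/N| / (1 - |(θ N - N)/N|)))
      atTop (𝓝 0) := by
    have := hsq.mul (habs.div (habs.const_sub 1) (by norm_num))
    simpa using this
  have hd : Tendsto (fun N : ℕ => (N * Real.log (θ N / N) - (θ N - N)) + (N:ℝ) * ((θ N - N)/N)^2/2)
      atTop (𝓝 0) := by
    refine squeeze_zero_norm' ?_ herr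
    filter_upwards [eventually_gt_atTop 0, habs.eventually_lt_const one_pos] with N hN hlt
    have hN' : (0:ℝ) < N := by exact_mod_cast hN
    set x := (θ N - N)/N with hxd
    have hθ : θ N = N * (1 + x) := by rw [hxd]; field_simp; ring
    have hb := Real.abs_log_sub_add_sum_range_le (x := -x) (by rwa [abs_neg]) 2
    simp only [Finset.sum_range_succ, Finset.sum_range_zero, abs_neg, sub_neg_eq_add] at hb
    have e1 : θ N / N = 1 + x := by rw [hθ]; field_simp
    have e2 : θ N - N = N * x := by rw [hθ]; ring
    rw [e1, e2, Real.norm_eq_abs]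
    have e3 : (N * Real.log (1 + x) - N * x) + (N:ℝ) * x^2/2 = N * (0 + (-x)^(0+1)/(((0:ℕ):ℝ)+1)
        + (-x)^(1+1)/(((1:ℕ):ℝ)+1) + Real.log (1+x)) := by push_cast; ring
    rw [e3, abs_mul, abs_of_pos hN']
    calc _ ≤ (N:ℝ) * (|x|^(2+1) / (1 - |x|)) := by gcongr
      _ = _ := by rw [← sq_abs x]; ring
  have := hd.sub (hsq.div_const 2)
  have e : (0:ℝ) - s^2/2 = -s^2/2 := by ring
  rw [e] at this
  refine this.congr fun N => by ring

lemma local_lim (s : ℝ) (θ : ℕ → ℝ)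
    (hlim : Tendsto (fun N : ℕ => (θ N - (N : ℝ)) / Real.sqrt (N : ℝ)) atTop (𝓝 s)) :
    Tendsto (fun N : ℕ => Real.sqrt N * poisW (θ N) (N-1)) atTop (𝓝 (gphi s)) := by
  have h1 := (Real.continuous_exp.tendsto _).comp (log_lim s θ hlim)
  have h2 : Tendsto (fun N : ℕ => (Real.sqrt 2 * Stirling.stirlingSeq N)⁻¹) atTop
      (𝓝 (Real.sqrt 2 * Real.sqrt Real.pi)⁻¹) :=
    (Stirling.tendsto_stirlingSeq_sqrt_pi.const_mul _).inv₀ (by positivity)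
  have h3 := (ratio_tendsto s θ hlim).inv₀ one_ne_zero
  have := (h1.mul h2).mul h3
  rw [inv_one, mul_one, ← Real.sqrt_mul (by norm_num), ← div_eq_mul_inv] at this
  refine this.congr' ?_
  filter_upwards [eventually_gt_atTop 0, (theta_inf s θ hlim).eventually_gt_atTop 0] with N hN hθ
  have hN' : (0:ℝ) < N := by exact_mod_cast hN
  obtain ⟨n, rfl⟩ : ∃ n, N = n+1 := ⟨N-1, by omega⟩
  simp only [Function.comp, Nat.add_sub_cancel]
  set t := θ (n+1)
  set M := n + 1 with hM
  have e1 : Real.exp (M * Real.log (t / M) - (t - M)) = (t/M)^M * (Real.exp (-t) * Real.exp 1 ^ M) := by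
    have e0 : M * Real.log (t / M) - (t - M) = M * Real.log (t / M) + (-t + M * 1) := by ring
    rw [e0, Real.exp_add, Real.exp_add, Real.exp_nat_mul, Real.exp_nat_mul,
      Real.exp_log (by positivity)]
  rw [e1, Stirling.stirlingSeq, Real.sqrt_mul (by norm_num)]
  have e2 : ((M ! : ℕ) : ℝ) = M * (n ! : ℝ) := by rw [hM, Nat.factorial_succ]; push_cast; ring
  have e3 : t ^ M = t^n * t := by rw [hM, pow_succ]
  have hs2 : Real.sqrt 2 > 0 := by positivity
  have hsM : Real.sqrt M > 0 := Real.sqrt_pos.2 hN'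
  have hn : (0:ℝ) < n ! := by positivity
  rw [poisW, e2, div_pow, div_pow, e3]
  field_simp

lemma pow_gauss_int (n : ℕ) : MeasureTheory.Integrable (fun t : ℝ => t ^ n * Real.exp (-t^2/2)) := by
  have := integrable_rpow_mul_exp_neg_mul_sq (b := 1/2) (by norm_num) (s := (n:ℝ))
    (by have : (0:ℝ) ≤ n := by positivity
        linarith)
  refine this.congr (Eventually.of_forall fun t => ?_)
  simp only [Real.rpow_natCast]
  ring_nf

lemma pow_gauss_lim (n : ℕ) : Tendsto (fun t : ℝ => t ^ n * Real.exp (-t^2/2)) atTop (𝓝 0) := by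
  have h := rpow_mul_exp_neg_mul_sq_isLittleO_exp_neg (b := 1/2) (by norm_num) (n:ℝ)
  have h2 : Tendsto (fun x : ℝ => Real.exp (-(1/2) * x)) atTop (𝓝 0) := by
    apply Real.tendsto_exp_atBot.comp
    exact tendsto_id.const_mul_atTop_of_neg (by norm_num)
  refine (h.trans_tendsto h2).congr fun t => ?_
  simp only [Real.rpow_natCast]
  ring_nf

lemma poly_gauss (P : Polynomial ℤ) :
    MeasureTheory.Integrable (fun t : ℝ => Real.exp (-t^2/2) * Polynomial.aeval t P) ∧
    Tendsto (fun t : ℝ => Real.exp (-t^2/2) * Polynomial.aeval t P) atTop (𝓝 0) := by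
  induction P using Polynomial.induction_on' with
  | add p q hp hq =>
    simp only [map_add, mul_add]
    exact ⟨hp.1.add hq.1, by simpa using hp.2.add hq.2⟩
  | monomial n a =>
    have e : (fun t : ℝ => Real.exp (-t^2/2) * Polynomial.aeval t (Polynomial.monomial n a))
      = fun t : ℝ => (a:ℝ) * (t ^ n * Real.exp (-t^2/2)) := by
      funext t; simp [Polynomial.aeval_monomial]; ring
    rw [e]
    exact ⟨(pow_gauss_int n).const_mul _, by simpa using (pow_gauss_lim n).const_mul (a:ℝ)⟩

lemma herm_gauss (x y : ℕ) :
    MeasureTheory.Integrable (fun t : ℝ => Real.exp (-t^2/2) * herm x t * herm y t) ∧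
    Tendsto (fun t : ℝ => Real.exp (-t^2/2) * herm x t * herm y t) atTop (𝓝 0) := by
  have := poly_gauss (Polynomial.hermite x * Polynomial.hermite y)
  simpa only [map_mul, ← mul_assoc, herm] using this

def hermI (s : ℝ) (x y : ℕ) : ℝ := ∫ t in Set.Ioi s, Real.exp (-t^2/2) * herm x t * herm y t

lemma hermI_symm (s : ℝ) (x y : ℕ) : hermI s x y = hermI s y x := by
  unfold hermI; congr 1; funext t; ring

lemma gauss_deriv (t : ℝ) : HasDerivAt (fun t : ℝ => Real.exp (-t^2/2)) (-t * Real.exp (-t^2/2)) t := by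
  have h : HasDerivAt (fun t : ℝ => -t^2/2) (-t) t := by
    have := ((hasDerivAt_pow 2 t).neg).div_const 2
    convert! this using 1
    simp; ring
  convert! h.exp using 1
  ring

lemma hermI_succ (s : ℝ) (x y : ℕ) : hermI s (x+1) (y+1) =
    Real.exp (-s^2/2) * herm x s * herm (y+1) s + ((y:ℝ)+1) * hermI s x y := by
  have i1 := (herm_gauss (x+1) (y+1)).1
  have i2 := (herm_gauss x y).1.const_mul ((y:ℝ)+1)
  have hl : Tendsto (fun t : ℝ => -(Real.exp (-t^2/2) * herm x t * herm (y+1) t)) atTop (𝓝 0) := by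
    simpa using (herm_gauss x (y+1)).2.neg
  have := MeasureTheory.integral_Ioi_of_hasDerivAt_of_tendsto' (a := s)
    (f' := fun t => Real.exp (-t^2/2) * herm (x+1) t * herm (y+1) t
      - ((y:ℝ)+1) * (Real.exp (-t^2/2) * herm x t * herm y t)) ?_ (i1.sub i2).integrableOn hl
  · rw [MeasureTheory.integral_sub i1.integrableOn i2.integrableOn,
      MeasureTheory.integral_const_mul] at this
    unfold hermI
    linarith
  · intro t _
    convert! (((gauss_deriv t).mul (herm_hasDerivAt' x t)).mul (herm_hasDerivAt y t)).neg using 1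
    simp only [Pi.mul_apply]
    ring

lemma hermI_succ0 (s : ℝ) (x : ℕ) : hermI s (x+1) 0 = Real.exp (-s^2/2) * herm x s := by
  have i1 := (herm_gauss (x+1) 0).1
  have hl := (herm_gauss x 0).2.neg
  simp only [herm_zero, mul_one, neg_zero] at i1 hl
  have := MeasureTheory.integral_Ioi_of_hasDerivAt_of_tendsto' (a := s)
    (f' := fun t => Real.exp (-t^2/2) * herm (x+1) t) ?_ i1.integrableOn hl
  · unfold hermI
    simp only [herm_zero, mul_one]
    linarith
  · intro t _
    convert! ((gauss_deriv t).mul (herm_hasDerivAt' x t)).neg using 1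
    ring

lemma gphi_nonneg (v : ℝ) : 0 ≤ gphi v := by unfold gphi; positivity
lemma gphi_cont : Continuous gphi := by unfold gphi; fun_prop
lemma gphi_int : MeasureTheory.Integrable gphi := by
  have := (pow_gauss_int 0).div_const (Real.sqrt (2 * Real.pi))
  simp only [pow_zero, one_mul] at this
  exact this
lemma gphi_integral : ∫ v, gphi v = 1 := by
  have := integral_gaussian (1/2)
  unfold gphi
  rw [MeasureTheory.integral_div]
  have e : (fun v : ℝ => Real.exp (-v^2/2)) = fun v => Real.exp (-(1/2) * v^2) := by
    funext v; ring_nf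
  rw [e, this, div_eq_one_iff_eq (by positivity)]
  congr 1; ring

lemma scheffe (f : ℕ → ℝ → ℝ) (g : ℝ → ℝ) (hf : ∀ᶠ N in atTop, MeasureTheory.Integrable (f N))
    (hf0 : ∀ N v, 0 ≤ f N v) (hf1 : ∀ᶠ N in atTop, ∫ v, f N v = 1)
    (hg : MeasureTheory.Integrable g) (hg0 : ∀ v, 0 ≤ g v) (hg1 : ∫ v, g v = 1)
    (h : ∀ v, Tendsto (fun N => f N v) atTop (𝓝 (g v))) :
    Tendsto (fun N => ∫ v, |f N v - g v|) atTop (𝓝 0) := by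
  have hm : Tendsto (fun N => ∫ v, min (f N v) (g v)) atTop (𝓝 (∫ v, g v)) := by
    apply MeasureTheory.tendsto_integral_filter_of_dominated_convergence g
    · filter_upwards [hf] with N hN
      exact (hN.inf hg).aestronglyMeasurable
    · refine Eventually.of_forall fun N => Eventually.of_forall fun v => ?_
      rw [Real.norm_eq_abs, abs_of_nonneg (le_min (hf0 N v) (hg0 v))]
      exact min_le_right _ _
    · exact hg
    · refine Eventually.of_forall fun v => ?_
      simpa using (h v).min (tendsto_const_nhds (x := g v))
  rw [hg1] at hm
  have := (hm.const_mul 2).const_sub 2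
  norm_num at this
  refine this.congr' ?_
  filter_upwards [hf, hf1] with N hN hN1
  have e : (fun v => |f N v - g v|) = fun v => (f N v + g v) - 2 * min (f N v) (g v) := by
    funext v
    rcases le_total (f N v) (g v) with h | h
    · rw [min_eq_left h, abs_of_nonpos (by linarith)]; ring
    · rw [min_eq_right h, abs_of_nonneg (by linarith)]; ring
  have hi : MeasureTheory.Integrable (fun v => min (f N v) (g v)) := hN.inf hg
  have hs : MeasureTheory.Integrable (fun v => f N v + g v) := hN.add hg
  rw [e, MeasureTheory.integral_sub hs (hi.const_mul 2), MeasureTheory.integral_add hN hg,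
    MeasureTheory.integral_const_mul, hN1, hg1]
  norm_num

lemma poisW_deriv_zero (t : ℝ) : HasDerivAt (fun θ => poisW θ 0) (-poisW t 0) t := by
  simp only [poisW, pow_zero, Nat.factorial_zero, Nat.cast_one, mul_one, div_one]
  convert! (hasDerivAt_neg t).exp using 1
  ring

lemma poisW_deriv_succ (n : ℕ) (t : ℝ) :
    HasDerivAt (fun θ => poisW θ (n+1)) (poisW t n - poisW t (n+1)) t := by
  unfold poisW
  convert! (((hasDerivAt_neg t).exp).mul (hasDerivAt_pow (n+1) t)).div_const ((n+1)! : ℝ) using 1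
  rw [Nat.factorial_succ]; push_cast
  have : (0:ℝ) < n ! := by positivity
  have : (0:ℝ) < (n:ℝ) + 1 := by positivity
  simp
  field_simp
  ring

lemma sum_poisW_deriv (n : ℕ) (t : ℝ) :
    HasDerivAt (fun θ => ∑ m ∈ Finset.range (n+1), poisW θ m) (-poisW t n) t := by
  induction n with
  | zero => simpa using poisW_deriv_zero t
  | succ n ih =>
    simp_rw [fun θ => Finset.sum_range_succ (fun m => poisW θ m) (n+1)]
    convert! ih.add (poisW_deriv_succ n t) using 1
    ring

lemma sum_poisW_lim (n : ℕ) :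
    Tendsto (fun θ => ∑ m ∈ Finset.range n, poisW θ m) atTop (𝓝 0) := by
  have : ∀ m ∈ Finset.range n, Tendsto (fun θ => poisW θ m) atTop (𝓝 0) := by
    intro m _
    have := (Real.tendsto_pow_mul_exp_neg_atTop_nhds_zero m).div_const (m ! : ℝ)
    rw [zero_div] at this
    exact this.congr fun t => by unfold poisW; ring
  simpa using tendsto_finsetSum _ this

def rawF (N : ℕ) (v : ℝ) : ℝ := Real.sqrt N * poisW (N + v * Real.sqrt N) (N-1)
def dens (N : ℕ) : ℝ → ℝ := Set.indicator (Set.Ioi (-Real.sqrt N)) (rawF N)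

lemma arg_nonneg (N : ℕ) (v : ℝ) (hv : -Real.sqrt N ≤ v) : 0 ≤ N + v * Real.sqrt N := by
  have h := Real.mul_self_sqrt (Nat.cast_nonneg N : (0:ℝ) ≤ N)
  have := mul_le_mul_of_nonneg_right hv (Real.sqrt_nonneg N)
  linarith

lemma rawF_nonneg (N : ℕ) (v : ℝ) (hv : -Real.sqrt N ≤ v) : 0 ≤ rawF N v := by
  have := arg_nonneg N v hv
  unfold rawF poisW; positivity

lemma rawF_integral (N : ℕ) (hN : 0 < N) (u : ℝ) (hu : -Real.sqrt N ≤ u) :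
    MeasureTheory.IntegrableOn (rawF N) (Set.Ioi u) ∧
    ∫ v in Set.Ioi u, rawF N v = ∑ m ∈ Finset.range N, poisW (N + u * Real.sqrt N) m := by
  obtain ⟨n, rfl⟩ : ∃ n, N = n+1 := ⟨N-1, by omega⟩
  set S := Real.sqrt ((n+1 : ℕ):ℝ) with hS
  have hSp : 0 < S := Real.sqrt_pos.2 (by positivity)
  have hd : ∀ x ∈ Set.Ici u, HasDerivAt
      (fun v => -∑ m ∈ Finset.range (n+1), poisW (((n+1:ℕ):ℝ) + v * S) m) (rawF (n+1) x) x := by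
    intro x _
    have h1 : HasDerivAt (fun v : ℝ => ((n+1:ℕ):ℝ) + v * S) S x := by
      simpa using ((hasDerivAt_id x).mul_const S).const_add ((n+1:ℕ):ℝ)
    convert! ((sum_poisW_deriv n _).comp x h1).neg using 1
    simp only [rawF, Nat.add_sub_cancel, ← hS]; ring
  have hl : Tendsto (fun v => -∑ m ∈ Finset.range (n+1), poisW (((n+1:ℕ):ℝ) + v * S) m) atTop (𝓝 0) := by
    have h2 : Tendsto (fun v : ℝ => ((n+1:ℕ):ℝ) + v * S) atTop atTop :=
      tendsto_atTop_add_const_left _ _ (tendsto_id.atTop_mul_const hSp)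
    simpa using ((sum_poisW_lim (n+1)).comp h2).neg
  have hp : ∀ x ∈ Set.Ioi u, 0 ≤ rawF (n+1) x := fun x hx =>
    rawF_nonneg _ _ (hu.trans (le_of_lt hx))
  refine ⟨MeasureTheory.integrableOn_Ioi_deriv_of_nonneg' hd hp hl, ?_⟩
  rw [MeasureTheory.integral_Ioi_of_hasDerivAt_of_nonneg' hd hp hl]
  simp

lemma dens_lim (v : ℝ) : Tendsto (fun N => dens N v) atTop (𝓝 (gphi v)) := by
  have := local_lim v (fun N => N + v * Real.sqrt N) ?_
  · refine this.congr' ?_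
    have h : Tendsto (fun N : ℕ => -Real.sqrt (N:ℝ)) atTop atBot := tendsto_neg_atTop_atBot.comp sqrtN_inf
    filter_upwards [h.eventually_lt_atBot v] with N hN
    rw [dens, Set.indicator_of_mem (by exact hN)]; rfl
  · refine tendsto_const_nhds.congr' ?_
    filter_upwards [eventually_gt_atTop 0] with N hN
    have : 0 < Real.sqrt (N:ℝ) := Real.sqrt_pos.2 (by exact_mod_cast hN)
    field_simp
    ring

lemma dens_L1 : Tendsto (fun N => ∫ v, |dens N v - gphi v|) atTop (𝓝 0) := by
  apply scheffe dens gphi _ _ _ gphi_int gphi_nonneg gphi_integral dens_lim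
  · filter_upwards [eventually_gt_atTop 0] with N hN
    exact (rawF_integral N hN _ le_rfl).1.integrable_indicator measurableSet_Ioi
  · intro N v
    exact Set.indicator_nonneg (fun x hx => rawF_nonneg N x (le_of_lt hx)) v
  · filter_upwards [eventually_gt_atTop 0] with N hN
    rw [dens, MeasureTheory.integral_indicator measurableSet_Ioi, (rawF_integral N hN _ le_rfl).2]
    have : (N:ℝ) + -Real.sqrt N * Real.sqrt N = 0 := by
      have h := Real.mul_self_sqrt (Nat.cast_nonneg N : (0:ℝ) ≤ N)
      linarith
    rw [this]
    obtain ⟨n, rfl⟩ : ∃ n, N = n+1 := ⟨N-1, by omega⟩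
    rw [Finset.sum_range_succ']
    simp [poisW]

lemma clt (s : ℝ) (θ : ℕ → ℝ) (hpos : ∀ N, 0 < θ N)
    (hlim : Tendsto (fun N : ℕ => (θ N - (N : ℝ)) / Real.sqrt (N : ℝ)) atTop (𝓝 s)) :
    Tendsto (fun N => ∑ m ∈ Finset.range N, poisW (θ N) m) atTop (𝓝 (∫ v in Set.Ioi s, gphi v)) := by
  have h1 : Tendsto (fun N : ℕ => ∫ v in Set.Ioi ((θ N - (N : ℝ)) / Real.sqrt (N : ℝ)), gphi v) atTop
      (𝓝 (∫ v in Set.Ioi s, gphi v)) := by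
    have hc : Continuous fun u : ℝ => ∫ v in s..u, gphi v :=
      intervalIntegral.continuous_primitive (fun a b => gphi_int.intervalIntegrable) s
    have := ((hc.tendsto s).comp hlim).const_sub (∫ v in Set.Ioi s, gphi v)
    rw [intervalIntegral.integral_same, sub_zero] at this
    refine this.congr fun N => ?_
    have := intervalIntegral.integral_interval_add_Ioi (a := s)
      (b := (θ N - (N : ℝ)) / Real.sqrt (N : ℝ)) gphi_int.integrableOn gphi_int.integrableOn
    simp only [Function.comp]
    linarith
  have h2 : Tendsto (fun N : ℕ => ∑ m ∈ Finset.range N, poisW (θ N) m -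
      ∫ v in Set.Ioi ((θ N - (N : ℝ)) / Real.sqrt (N : ℝ)), gphi v) atTop (𝓝 0) := by
    refine squeeze_zero_norm' ?_ dens_L1
    filter_upwards [eventually_gt_atTop 0] with N hN
    have hN' : (0:ℝ) < N := by exact_mod_cast hN
    have hsp := Real.sqrt_pos.2 hN'
    set u := (θ N - (N : ℝ)) / Real.sqrt (N : ℝ) with hu
    have hθ : θ N = N + u * Real.sqrt N := by rw [hu]; field_simp; ring
    have huge : -Real.sqrt N ≤ u := by
      rw [hu, le_div_iff₀ hsp]
      have h := Real.mul_self_sqrt hN'.le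
      have := hpos N
      linarith
    have hI := (rawF_integral N hN _ le_rfl).1.integrable_indicator measurableSet_Ioi
    have e : ∑ m ∈ Finset.range N, poisW (θ N) m = ∫ v in Set.Ioi u, dens N v := by
      rw [hθ, ← (rawF_integral N hN u huge).2]
      refine MeasureTheory.setIntegral_congr_fun measurableSet_Ioi fun v hv => ?_
      rw [dens, Set.indicator_of_mem]
      exact lt_of_le_of_lt huge hv
    have hD : MeasureTheory.Integrable (dens N) := hI
    rw [e, ← MeasureTheory.integral_sub hD.integrableOn gphi_int.integrableOn]
    refine (MeasureTheory.norm_integral_le_integral_norm _).trans ?_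
    exact MeasureTheory.setIntegral_le_integral (hD.sub gphi_int).norm
      (Eventually.of_forall fun v => norm_nonneg _)
  have := h2.add h1
  simpa using this

lemma chJ_tendsto (s : ℝ) (θ : ℕ → ℝ) (hpos : ∀ N, 0 < θ N)
    (hlim : Tendsto (fun N : ℕ => (θ N - (N : ℝ)) / Real.sqrt (N : ℝ)) atTop (𝓝 s)) (x y : ℕ) :
    Tendsto (fun N => chJ N (θ N) x y) atTop (𝓝 (hermI s x y / Real.sqrt (2 * Real.pi))) := by
  have hinf := theta_inf s θ hlim
  have hr : Tendsto (fun N : ℕ => Real.sqrt (θ N / N)) atTop (𝓝 1) := by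
    have := (Real.continuous_sqrt.tendsto _).comp (ratio_tendsto s θ hlim)
    rw [Real.sqrt_one] at this
    exact this
  have hr' : ∀ N : ℕ, Real.sqrt (θ N / N) = Real.sqrt (θ N) / Real.sqrt N := fun N =>
    Real.sqrt_div (hpos N).le _
  have hW : Tendsto (fun N : ℕ => Real.sqrt (θ N) * poisW (θ N) (N-1)) atTop (𝓝 (gphi s)) := by
    have := hr.mul (local_lim s θ hlim)
    rw [one_mul] at this
    refine this.congr' ?_
    filter_upwards [eventually_gt_atTop 0] with N hN
    have : 0 < Real.sqrt (N:ℝ) := Real.sqrt_pos.2 (by exact_mod_cast hN)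
    rw [hr']; field_simp
  have hm : Tendsto (fun N : ℕ => (θ N - (N:ℕ)) / Real.sqrt (θ N)) atTop (𝓝 s) := by
    have := hlim.div hr one_ne_zero
    rw [div_one] at this
    refine this.congr' ?_
    filter_upwards [eventually_gt_atTop 0] with N hN
    have : 0 < Real.sqrt (N:ℝ) := Real.sqrt_pos.2 (by exact_mod_cast hN)
    have := Real.sqrt_pos.2 (hpos N)
    simp only [Pi.div_apply]
    rw [hr']; field_simp
  have hm' : Tendsto (fun N : ℕ => (θ N - ((N-1:ℕ):ℝ)) / Real.sqrt (θ N)) atTop (𝓝 s) := by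
    have h0 : Tendsto (fun N => (1:ℝ) / Real.sqrt (θ N)) atTop (𝓝 0) :=
        Tendsto.const_div_atTop (Real.tendsto_sqrt_atTop.comp hinf) _
    have := hm.add h0
    rw [add_zero] at this
    refine this.congr' ?_
    filter_upwards [eventually_gt_atTop 0] with N hN
    rw [Nat.cast_sub (by omega)]; push_cast; ring
  have hP := chP_tendsto s θ (fun N => N) hpos hinf hm
  have hP' := chP_tendsto s θ (fun N => N-1) hpos hinf hm'
  have hx0 : ∀ x, Tendsto (fun N => chJ N (θ N) (x+1) 0) atTop
      (𝓝 (hermI s (x+1) 0 / Real.sqrt (2 * Real.pi))) := by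
    intro x
    have := hW.mul (hP' x)
    rw [hermI_succ0, mul_div_right_comm]
    refine this.congr' ?_
    filter_upwards [eventually_gt_atTop 0] with N hN
    obtain ⟨n, rfl⟩ : ∃ n, N = n+1 := ⟨N-1, by omega⟩
    rw [chJ_succ0 _ _ (hpos _)]; rfl
  induction x generalizing y with
  | zero =>
    cases y with
    | zero =>
      have := clt s θ hpos hlim
      have e : hermI s 0 0 / Real.sqrt (2 * Real.pi) = ∫ v in Set.Ioi s, gphi v := by
        unfold hermI gphi
        simp only [herm_zero, mul_one]
        rw [MeasureTheory.integral_div]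
      rw [e]
      refine this.congr fun N => ?_
      unfold chJ chP
      simp [charlier_zero_right]
    | succ y =>
      rw [hermI_symm]
      simp_rw [fun N => chJ_symm N (θ N) 0 (y+1)]
      exact hx0 y
  | succ x ih =>
    cases y with
    | zero => exact hx0 x
    | succ y =>
      have := ((hW.mul (hP' x)).mul (hP (y+1))).add ((ih y).const_mul ((y:ℝ)+1))
      have e : hermI s (x+1) (y+1) / Real.sqrt (2 * Real.pi) = gphi s * herm x s * herm (y+1) s
          + ((y:ℝ)+1) * (hermI s x y / Real.sqrt (2 * Real.pi)) := by
        rw [hermI_succ]; unfold gphi; ring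
      rw [e]
      refine this.congr' ?_
      filter_upwards [eventually_gt_atTop 0] with N hN
      obtain ⟨n, rfl⟩ : ∃ n, N = n+1 := ⟨N-1, by omega⟩
      rw [chJ_succ _ _ (hpos _)]; rfl

lemma kernel_tendsto (s : ℝ) (θ : ℕ → ℝ) (hpos : ∀ N, 0 < θ N)
    (hlim : Tendsto (fun N : ℕ => (θ N - (N : ℝ)) / Real.sqrt (N : ℝ)) atTop (𝓝 s)) (x y : ℕ) :
    Tendsto (fun N => charlierKernel N (θ N) x y) atTop (𝓝 (discreteHermiteKernel s x y)) := by
  simp_rw [fun N => kernel_eq N (θ N) (hpos N) x y]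
  have := (chJ_tendsto s θ hpos hlim x y).const_mul (Real.sqrt ((x ! : ℝ) * (y ! : ℝ)))⁻¹
  have e : discreteHermiteKernel s x y =
      (Real.sqrt ((x ! : ℝ) * (y ! : ℝ)))⁻¹ * (hermI s x y / Real.sqrt (2 * Real.pi)) := by
    have : discreteHermiteKernel s x y =
      (Real.sqrt (2 * Real.pi * (x ! : ℝ) * (y ! : ℝ)))⁻¹ * hermI s x y := rfl
    rw [this, mul_assoc (2 * Real.pi), Real.sqrt_mul (by positivity), mul_inv]
    ring
  rw [e]
  exact this

/-- If `θ(N) > 0` and `(θ(N) − N)/√N → s`, then for every `k ≥ 1` and distinct points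
`y_1, …, y_k ∈ ℕ`, the `k×k` determinants of the Charlier kernel converge to the
corresponding determinant of the discrete Hermite kernel. -/
theorem charlierKernel_det_tendsto_discreteHermiteKernel_det
    (s : ℝ) (θ : ℕ → ℝ) (hpos : ∀ N, 0 < θ N)
    (hlim : Tendsto (fun N : ℕ => (θ N - (N : ℝ)) / Real.sqrt (N : ℝ)) atTop (𝓝 s))
    (k : ℕ) (hk : 1 ≤ k) (y : Fin k → ℕ) (hy : Function.Injective y) :
    Tendsto
      (fun N : ℕ => Matrix.det (Matrix.of fun i j : Fin k => charlierKernel N (θ N) (y i) (y j)))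
      atTop
      (𝓝 (Matrix.det (Matrix.of fun i j : Fin k => discreteHermiteKernel s (y i) (y j)))) := by
  have hK : ∀ a b : ℕ, Tendsto (fun N : ℕ => charlierKernel N (θ N) a b) atTop
      (𝓝 (discreteHermiteKernel s a b)) := kernel_tendsto s θ hpos hlim
  have hc : Continuous fun A : Matrix (Fin k) (Fin k) ℝ => A.det := continuous_id.matrix_det
  refine (hc.tendsto _).comp ?_
  refine tendsto_pi_nhds.2 fun i => tendsto_pi_nhds.2 fun j => ?_
  exact hK (y i) (y j)

end
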